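/- arXiv:math/0702466 — 7 statements merged into one kernel-verified Lean document; each statement's English description precedes it below -/
import Mathlib

section
/- Let M be an ultrametric space which embeds isometrically into an indivisible ultrametric space N. Then M contains no infinite strictly increasing sequence of balls: there is no sequence (B_n)_{n∈ℕ} of balls of M with B_n ⊊ B_{n+1} for all n. -/
/-- The spectrum of a point `a`: the set of distances from `a`. -/
def SpecAt {M : Type*} [MetricSpace M] (a : M) : Set ℝ := {r | ∃ x : M, dist a x = r}

/-- The spectrum of a metric space: the set of realized distances. -/
def SpecOf (M : Type*) [MetricSpace M] : Set ℝ := {r | ∃ x y : M, dist x y = r}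

/-- The spectrum of `a` within a subset `B`. -/
def SpecIn {M : Type*} [MetricSpace M] (B : Set M) (a : M) : Set ℝ := {r | ∃ x ∈ B, dist a x = r}

/-- A metric space is ultrametric if it satisfies the strong triangle inequality. -/
def UltraDist (M : Type*) [MetricSpace M] : Prop :=
  ∀ x y z : M, dist x z ≤ max (dist x y) (dist y z)

/-- A metric space is indivisible if for every subset `A`, the space embeds isometrically
into `A` or into its complement. -/
def Indiv (M : Type*) [MetricSpace M] : Prop :=
  ∀ A : Set M, (∃ f : M → M, Isometry f ∧ ∀ x, f x ∈ A) ∨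
    (∃ f : M → M, Isometry f ∧ ∀ x, f x ∉ A)

/-- A ball: an open or closed ball of nonnegative radius. -/
def IsBallM {M : Type*} [MetricSpace M] (B : Set M) : Prop :=
  ∃ (a : M) (r : ℝ), 0 ≤ r ∧ (B = Metric.ball a r ∨ B = Metric.closedBall a r)

/-- The nerve of a metric space: closed balls whose radius is a realized distance
from the center. -/
def NervOf (M : Type*) [MetricSpace M] : Set (Set M) :=
  {B | ∃ (a : M) (r : ℝ), r ∈ SpecAt a ∧ B = Metric.closedBall a r}

/-- The sons of a set `B` of diameter `r`: the open balls of radius `r` centered in `B`. -/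
def SonOf {M : Type*} [MetricSpace M] (B : Set M) : Set (Set M) :=
  {S | ∃ a ∈ B, S = Metric.ball a (Metric.diam B)}

/-- A space is spec-endogeneous when every local spec-embedding extends to an
isometric self-embedding. -/
def SpecEndog (M : Type*) [MetricSpace M] : Prop :=
  ∀ (A : Set M) (f : M → M),
    (∀ x ∈ A, ∀ y ∈ A, dist (f x) (f y) = dist x y) →
    (∀ x ∈ A, SpecAt x ⊆ SpecAt (f x)) →
    ∃ g : M → M, Isometry g ∧ ∀ x ∈ A, g x = f x

/-- The spec-extension property. -/
def SpecExt (M : Type*) [MetricSpace M] : Prop :=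
  ∀ x y y' : M, x ≠ y → SpecAt y ⊆ SpecAt y' →
    ∃ x' : M, dist y' x' = dist x y ∧ SpecAt x ⊆ SpecAt x'

/-- The infinite spec-extension property. -/
def InfSpecExt (M : Type*) [MetricSpace M] : Prop :=
  ∀ x y y' : M, x ≠ y → SpecAt y ⊆ SpecAt y' →
    ∃ S : Set M, S.Infinite ∧
      (∀ z ∈ S, dist y' z = dist x y ∧ SpecAt x ⊆ SpecAt z) ∧
      (∀ z ∈ S, ∀ z' ∈ S, z ≠ z' → dist z z' = dist x y)

/-!
In a ball `B` of an ultrametric space every point is a centre, so a point outside `B` is farther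
from a given point of `B` than any point of `B` is. An increasing chain of balls therefore yields a
point `a` and points `x n` whose distances `r n` to `a` strictly increase, and so does its image in
the indivisible space. There, the relation "at distance less than some `r n`" is an equivalence;
choose a centre in each class and let `ρ u` be the distance from `u` to the centre of its class.
An isometric copy of `a` and the `x n` lies in a single class, and far along the copy it does not
matter whether distances are measured from the copy of `a` or from the chosen centre: `ρ` takes the
value `r n` at the copy of `x n` for all large `n`. Colouring `u` by the parity of the index `n`
with `ρ u = r n` makes every such copy two-coloured, which contradicts indivisibility.
-/

open Filter Metric

section Centers

variable {X ι : Type*} [PseudoMetricSpace X] [IsUltrametricDist X]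

/-- The equivalence relation "at distance less than some `r i`" on an ultrametric space. Its classes
are the open balls of radius `⨆ i, r i`, but the supremum is avoided because it may be infinite. -/
def distLTSetoid (r : ι → ℝ) (hr : ∃ i, 0 < r i) : Setoid X where
  r u v := ∃ i, dist u v < r i
  iseqv :=
    { refl := fun u ↦ by simpa only [dist_self] using hr
      symm := fun ⟨i, hi⟩ ↦ ⟨i, by rwa [dist_comm]⟩
      trans := fun {u v w} ⟨i, hi⟩ ⟨j, hj⟩ ↦
        (le_max_iff.1 (dist_triangle_max u v w)).elim
          (fun h ↦ ⟨i, h.trans_lt hi⟩) (fun h ↦ ⟨j, h.trans_lt hj⟩) }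

theorem exists_center_of_dist_lt (r : ι → ℝ) (hr : ∃ i, 0 < r i) :
    ∃ c : X → X, (∀ u, ∃ i, dist (c u) u < r i) ∧ ∀ u v i, dist u v < r i → c u = c v :=
  let S : Setoid X := distLTSetoid r hr
  ⟨fun u ↦ (Quotient.mk S u).out, Quotient.mk_out, fun _ _ i h ↦
    congrArg Quotient.out (Quotient.sound (s := S) ⟨i, h⟩)⟩

theorem exists_eventually_eq_of_dist_eq [PartialOrder ι] [NoMaxOrder ι] {r : ι → ℝ}
    (hr : StrictMono r) (hr_pos : ∃ i, 0 < r i) :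
    ∃ ρ : X → ℝ, ∀ (b : X) (y : ι → X), (∀ i, dist b (y i) = r i) →
      ∀ᶠ i in atTop, ρ (y i) = r i := by
  obtain ⟨c, hc_near, hc_eq⟩ := exists_center_of_dist_lt (X := X) r hr_pos
  refine ⟨fun u ↦ dist (c u) u, fun b y hy ↦ ?_⟩
  obtain ⟨i, hi⟩ := hc_near b
  filter_upwards [eventually_ge_atTop i] with j hij
  obtain ⟨k, hjk⟩ := exists_gt j
  have same_center : c b = c (y j) := hc_eq b (y j) k (by rw [hy]; exact hr hjk)
  have center_closer : dist (c b) b < dist b (y j) := by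
    rw [hy]
    exact hi.trans_le (hr.monotone hij)
  calc dist (c (y j)) (y j) = dist (c b) (y j) := by rw [same_center]
    _ = max (dist (c b) b) (dist b (y j)) :=
      IsUltrametricDist.dist_eq_max_of_dist_ne_dist _ _ _ center_closer.ne
    _ = r j := by rw [max_eq_right center_closer.le, hy]

theorem exists_set_frequently_mem_and_notMem_of_dist_eq {r : ℕ → ℝ} (hr : StrictMono r)
    (hr_pos : ∃ n, 0 < r n) :
    ∃ A : Set X, ∀ (b : X) (y : ℕ → X), (∀ n, dist b (y n) = r n) →
      (∃ᶠ n in atTop, y n ∈ A) ∧ ∃ᶠ n in atTop, y n ∉ A := by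
  obtain ⟨ρ, hρ⟩ := exists_eventually_eq_of_dist_eq (X := X) hr hr_pos
  refine ⟨ρ ⁻¹' (r '' {n | Even n}), fun b y hy ↦ ?_⟩
  have mem_iff_even : ∀ᶠ n in atTop, y n ∈ ρ ⁻¹' (r '' {n | Even n}) ↔ Even n := by
    filter_upwards [hρ b y hy] with n hn
    rw [Set.mem_preimage, hn]
    exact hr.injective.mem_set_image
  constructor
  · exact (Nat.frequently_even.and_eventually mem_iff_even).mono fun n h ↦ h.2.2 h.1
  · exact (Nat.frequently_odd.and_eventually mem_iff_even).mono fun n h ↦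
      mt h.2.1 (Nat.not_even_iff_odd.2 h.1)

end Centers

theorem Indiv.not_strictMono_dist {X : Type*} [MetricSpace X] [IsUltrametricDist X]
    (hX : Indiv X) (a : X) (x : ℕ → X) : ¬ StrictMono fun n ↦ dist a (x n) := by
  intro hx
  have dist_pos : ∃ n, 0 < dist a (x n) := ⟨1, dist_nonneg.trans_lt (hx one_pos)⟩
  obtain ⟨A, hA⟩ := exists_set_frequently_mem_and_notMem_of_dist_eq (X := X) hx dist_pos
  have copy_meets_both (g : X → X) (hg : Isometry g) :
      (∃ n, g (x n) ∈ A) ∧ ∃ n, g (x n) ∉ A :=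
    (hA (g a) (g ∘ x) fun n ↦ hg.dist_eq a (x n)).imp Frequently.exists Frequently.exists
  rcases hX A with ⟨g, hg, hg_mem⟩ | ⟨g, hg, hg_notMem⟩
  · obtain ⟨n, hn⟩ := (copy_meets_both g hg).2
    exact hn (hg_mem (x n))
  · obtain ⟨n, hn⟩ := (copy_meets_both g hg).1
    exact hg_notMem (x n) hn

section Balls

variable {X : Type*} [MetricSpace X] [IsUltrametricDist X]

theorem IsBallM.dist_lt_dist {B : Set X} (hB : IsBallM B) {a y z : X} (ha : a ∈ B) (hy : y ∈ B)
    (hz : z ∉ B) : dist a y < dist a z := by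
  obtain ⟨c, r, -, rfl | rfl⟩ := hB
  · rw [IsUltrametricDist.ball_eq_of_mem ha, mem_ball'] at hy hz
    exact hy.trans_le (not_lt.1 hz)
  · rw [IsUltrametricDist.closedBall_eq_of_mem ha, mem_closedBall'] at hy hz
    exact hy.trans_lt (not_le.1 hz)

theorem exists_strictMono_dist_of_strictMono_isBallM {B : ℕ → Set X} (hB : ∀ n, IsBallM (B n))
    (hmono : StrictMono B) : ∃ (a : X) (x : ℕ → X), StrictMono fun n ↦ dist a (x n) := by
  choose x hx_mem hx_notMem using fun n : ℕ ↦ Set.exists_of_ssubset (hmono n.lt_add_one)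
  refine ⟨x 0, fun n ↦ x (n + 1), strictMono_nat_of_lt_succ fun n ↦ ?_⟩
  have x_zero_mem : x 0 ∈ B (n + 2) := hmono.monotone (by lia) (hx_mem 0)
  exact (hB (n + 2)).dist_lt_dist x_zero_mem (hx_mem (n + 1)) (hx_notMem (n + 2))

end Balls

/-- An ultrametric space embedding isometrically into an indivisible
ultrametric space contains no infinite strictly increasing sequence of balls. -/
theorem stmt_0 {M N : Type*} [MetricSpace M] [MetricSpace N]
    (hM : UltraDist M) (hN : UltraDist N)
    (f : M → N) (hf : Isometry f) (hind : Indiv N) :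
    ¬ ∃ B : ℕ → Set M, (∀ n, IsBallM (B n)) ∧ ∀ n, B n ⊂ B (n + 1) := by
  have : IsUltrametricDist M := ⟨hM⟩
  have : IsUltrametricDist N := ⟨hN⟩
  rintro ⟨B, hB, hB_ssubset⟩
  obtain ⟨a, x, hx⟩ :=
    exists_strictMono_dist_of_strictMono_isBallM hB (strictMono_nat_of_lt_succ hB_ssubset)
  refine hind.not_strictMono_dist (f a) (f ∘ x) ?_
  simpa only [Function.comp_apply, hf.dist_eq] using hx
end

section
/- If an ultrametric space M is indivisible, then every nonempty family of balls of M has a maximal element under inclusion (in particular there is no infinite strictly increasing sequence of balls), and the diameter of M is attained: M is bounded and there exist x, y ∈ M with d(x,y) = δ(M), where δ(M) is the diameter of M. -/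
/-!
Fix a base point `a`. If distances `r n = dist a (x n)` were strictly increasing, call two points
close when their distance is less than some `r n`; this is an equivalence relation, so choose a
representative in each class. An isometric image of the sequence stays in one class, and since all
triangles are isosceles, its far enough terms `f (x n)` lie at distance exactly `r n` from the
representative. Colouring a point by the parity of the index so read off defeats indivisibility.
Hence every nonempty set has a point farthest from `a`. In a family of balls through `a`, one that
contains a farthest point of their union is the whole union; and a point farthest from `a` in all
of `M` attains the diameter.
-/

open Filter Set

lemma isBounded_of_isMaxOn_dist {X : Type*} [PseudoMetricSpace X] {s : Set X} {a x : X}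
    (hx : IsMaxOn (dist a) s x) : Bornology.IsBounded s :=
  Metric.isBounded_closedBall.subset fun _ hu => Metric.mem_closedBall'.2 (hx hu)

section Ultrametric

variable {X : Type*} [PseudoMetricSpace X] [IsUltrametricDist X]

/-- The relation of being at a distance in `I`, where `I` is an initial segment of the line
containing `0`. The quotient by it is the partition of `X` into balls of radius `I`; taking an
initial segment instead of a real number covers open, closed and infinite radii at once. -/
def distSetoid (X : Type*) [PseudoMetricSpace X] [IsUltrametricDist X] {I : Set ℝ}
    (hI : IsLowerSet I) (hI₀ : 0 ∈ I) : Setoid X where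
  r u v := dist u v ∈ I
  iseqv :=
    { refl u := by rwa [dist_self]
      symm {u v} h := by rwa [dist_comm]
      trans {u v w} huv hvw := hI (dist_triangle_max u v w) (max_rec' (· ∈ I) huv hvw) }

lemma dist_eq_of_dist_lt {x y z : X} (h : dist x y < dist y z) : dist x z = dist y z :=
  (IsUltrametricDist.dist_eq_max_of_dist_ne_dist x y z h.ne).trans (max_eq_right h.le)

lemma exists_coloring_eventually_eq {r : ℕ → ℝ} (hr : StrictMono r) (hr₀ : 0 ≤ r 0) :
    ∃ κ : X → ℕ, ∀ (b : X) (y : ℕ → X), (∀ n, dist b (y n) = r n) →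
      ∀ᶠ n in atTop, κ (y n) = n := by
  have hI : IsLowerSet {t | ∃ n, t < r n} := fun _ _ hle ⟨n, hn⟩ => ⟨n, hle.trans_lt hn⟩
  let S : Setoid X := distSetoid X hI ⟨1, hr₀.trans_lt (hr zero_lt_one)⟩
  let rep : X → X := fun u => (Quotient.mk S u).out
  refine ⟨fun u => Function.invFun r (dist (rep u) u), fun b y hby => ?_⟩
  obtain ⟨N, hN⟩ : ∃ N, dist (rep b) b < r N := Quotient.mk_out (s := S) b
  filter_upwards [eventually_ge_atTop N] with n hn
  have rep_eq : rep (y n) = rep b := by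
    have hclose : S b (y n) := ⟨n + 1, (hby n).trans_lt (hr n.lt_succ_self)⟩
    exact congrArg Quotient.out (Quotient.sound hclose).symm
  have dist_rep : dist (rep b) (y n) = r n := by
    rw [← hby n]
    exact dist_eq_of_dist_lt (by rw [hby n]; exact hN.trans_le (hr.monotone hn))
  rw [rep_eq, dist_rep, Function.leftInverse_invFun hr.injective n]

lemma dist_le_of_isMaxOn_dist {s : Set X} {a x u v : X} (hx : IsMaxOn (dist a) s x)
    (hu : u ∈ s) (hv : v ∈ s) : dist u v ≤ dist a x :=
  (dist_triangle_max u a v).trans (max_le (dist_comm a u ▸ hx hu) (hx hv))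

lemma diam_eq_dist_of_isMaxOn_dist {s : Set X} {a x : X} (ha : a ∈ s) (hxs : x ∈ s)
    (hx : IsMaxOn (dist a) s x) : Metric.diam s = dist a x :=
  le_antisymm
    (Metric.diam_le_of_forall_dist_le dist_nonneg fun _ hu _ hv => dist_le_of_isMaxOn_dist hx hu hv)
    (Metric.dist_le_diam_of_mem (isBounded_of_isMaxOn_dist hx) ha hxs)

end Ultrametric

section Balls

variable {M : Type*} [MetricSpace M] [IsUltrametricDist M]

lemma IsBallM.mem_of_dist_le {B : Set M} (hB : IsBallM B) {a x y : M} (ha : a ∈ B) (hx : x ∈ B)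
    (hyx : dist a y ≤ dist a x) : y ∈ B := by
  obtain ⟨c, r, -, rfl | rfl⟩ := hB
  · rw [IsUltrametricDist.ball_eq_of_mem ha, Metric.mem_ball'] at hx ⊢
    exact hyx.trans_lt hx
  · rw [IsUltrametricDist.closedBall_eq_of_mem ha, Metric.mem_closedBall'] at hx ⊢
    exact hyx.trans hx

lemma sUnion_mem_of_isMaxOn_dist {𝒮 : Set (Set M)} (hball : ∀ B ∈ 𝒮, IsBallM B) {a x : M}
    (ha : ∀ B ∈ 𝒮, a ∈ B) (hx𝒮 : x ∈ ⋃₀ 𝒮) (hx : IsMaxOn (dist a) (⋃₀ 𝒮) x) : ⋃₀ 𝒮 ∈ 𝒮 := by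
  obtain ⟨B, hB, hxB⟩ := hx𝒮
  have hsub : ⋃₀ 𝒮 ⊆ B := fun _ hy => (hball B hB).mem_of_dist_le (ha B hB) hxB (hx hy)
  rwa [hsub.antisymm (subset_sUnion_of_mem hB)]

end Balls

namespace Indiv

variable {M : Type*} [MetricSpace M] [IsUltrametricDist M]

lemma not_strictMono_dist_s4 (hM : Indiv M) (a : M) (x : ℕ → M) :
    ¬ StrictMono fun n => dist a (x n) := by
  intro hx
  obtain ⟨κ, hκ⟩ := exists_coloring_eventually_eq (X := M) hx dist_nonneg
  have recovers_index {f : M → M} (hf : Isometry f) : ∀ᶠ n in atTop, κ (f (x n)) = n :=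
    hκ (f a) (f ∘ x) fun n => hf.dist_eq a (x n)
  rcases hM {u | Even (κ u)} with ⟨f, hf, heven⟩ | ⟨f, hf, hodd⟩
  · obtain ⟨n, hn, hκn⟩ := (Nat.frequently_odd.and_eventually (recovers_index hf)).exists
    exact Nat.not_even_iff_odd.2 hn (hκn ▸ heven (x n))
  · obtain ⟨n, hn, hκn⟩ := (Nat.frequently_even.and_eventually (recovers_index hf)).exists
    exact hodd (x n) (by rwa [mem_ofPred_eq, hκn])

lemma wellFounded_gt_dist (hM : Indiv M) (a : M) : WellFounded (InvImage (· > ·) (dist a)) :=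
  wellFounded_iff_isEmpty_descending_chain.2
    ⟨fun ⟨x, hx⟩ => hM.not_strictMono_dist_s4 a x (strictMono_nat_of_lt_succ hx)⟩

lemma exists_isMaxOn_dist (hM : Indiv M) (a : M) {s : Set M} (hs : s.Nonempty) :
    ∃ x ∈ s, IsMaxOn (dist a) s x := by
  obtain ⟨x, hxs, hx⟩ := (hM.wellFounded_gt_dist a).has_min s hs
  exact ⟨x, hxs, fun y hy => not_lt.1 (hx y hy)⟩

lemma exists_maximal_ball (hM : Indiv M) {𝒮 : Set (Set M)} (hball : ∀ B ∈ 𝒮, IsBallM B)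
    (h𝒮 : 𝒮.Nonempty) : ∃ B, Maximal (· ∈ 𝒮) B := by
  by_cases hne : ∃ B ∈ 𝒮, B.Nonempty
  · obtain ⟨B, hB, a, ha⟩ := hne
    let 𝒯 : Set (Set M) := {C ∈ 𝒮 | a ∈ C}
    obtain ⟨x, hx𝒯, hx⟩ := hM.exists_isMaxOn_dist a (s := ⋃₀ 𝒯) ⟨a, B, ⟨hB, ha⟩, ha⟩
    obtain ⟨hU, haU⟩ : ⋃₀ 𝒯 ∈ 𝒯 :=
      sUnion_mem_of_isMaxOn_dist (fun C hC => hball C hC.1) (fun _ hC => hC.2) hx𝒯 hx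
    exact ⟨⋃₀ 𝒯, hU, fun C hC hUC => subset_sUnion_of_mem ⟨hC, hUC haU⟩⟩
  · obtain ⟨B, hB⟩ := h𝒮
    exact ⟨B, hB, fun C hC _ y hy => (hne ⟨C, hC, y, hy⟩).elim⟩

end Indiv

/-- In an indivisible ultrametric space, every nonempty family of balls
has a maximal element under inclusion, the space is bounded, and the diameter is
attained. -/
theorem stmt_4 {M : Type*} [MetricSpace M] [Nonempty M]
    (hM : UltraDist M) (hind : Indiv M) :
    (∀ 𝒮 : Set (Set M), (∀ B ∈ 𝒮, IsBallM B) → 𝒮.Nonempty →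
      ∃ B ∈ 𝒮, ∀ C ∈ 𝒮, B ⊆ C → B = C) ∧
    Bornology.IsBounded (Set.univ : Set M) ∧
    ∃ x y : M, dist x y = Metric.diam (Set.univ : Set M) := by
  have : IsUltrametricDist M := ⟨hM⟩
  refine ⟨fun 𝒮 hball h𝒮 => ?_, ?_⟩
  · obtain ⟨B, hB⟩ := hind.exists_maximal_ball hball h𝒮
    exact ⟨B, hB.prop, fun C hC hBC => hB.eq_of_subset hC hBC⟩
  · obtain ⟨a⟩ := ‹Nonempty M›
    obtain ⟨x, -, hx⟩ := hind.exists_isMaxOn_dist a univ_nonempty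
    exact ⟨isBounded_of_isMaxOn_dist hx, a, x,
      (diam_eq_dist_of_isMaxOn_dist (mem_univ a) (mem_univ x) hx).symm⟩
end

section
/- For a countable ultrametric space M, the following are equivalent: (i) M satisfies the infinite spec-extension property; (ii) M satisfies the spec-extension property and, for every B ∈ Nerv(M) and every son B' of B, there are infinitely many sons B'' of B such that the metric subspace on B' embeds isometrically into the metric subspace on B''. -/
/-!
Call `z` a spectral copy of `b` when `SpecAt b ⊆ SpecAt z`. Fix a distance `r > 0` realized at
`b`. In an ultrametric space, points of the closed ball of radius `r` around `b` lie in different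
sons exactly when they are at distance `r`, so the infinite spec-extension property says that
one-point extensions exist and that spectral copies of `b` occupy infinitely many of these sons.

A son receiving an isometric copy of the open ball around `b` contains a spectral copy of `b`:
distances from `b` that are less than `r` are realized inside the copy, and the larger ones are
realized at every point of the closed ball. Conversely, under the infinite spec-extension property
a partial isometry with finite domain that sends each point to a spectral copy of it extends to
any further point `m`: its value must be at the right distance from the image of the nearest point
and not too close to the finitely many other values, and each of these excludes at most one
candidate. Countability turns this into an isometric embedding of `M` sending `b` to any
prescribed spectral copy `z`, hence the son of `b` into the son of `z`.
-/

open Metric Order Set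

section Ultrametric

variable {X : Type*} [PseudoMetricSpace X] [IsUltrametricDist X]

lemma dist_eq_max_of_dist_le {x y z : X} (h : dist x y ≤ dist x z) :
    dist x z = max (dist x y) (dist y z) := by
  refine le_antisymm (dist_triangle_max x y z) (max_le h ?_)
  exact (dist_triangle_max y x z).trans (max_le ((dist_comm y x).trans_le h) le_rfl)

lemma dist_eq_of_ball_ne {a x y : X} {r : ℝ} (hx : x ∈ closedBall a r)
    (hy : y ∈ closedBall a r) (hxy : ball x r ≠ ball y r) : dist x y = r := by
  have hle : dist x y ≤ r := (dist_triangle_max x a y).trans (max_le hx (mem_closedBall'.1 hy))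
  exact hle.eq_of_not_lt fun hlt ↦ hxy (IsUltrametricDist.ball_eq_of_mem (mem_ball'.2 hlt))

lemma subsingleton_setOf_dist_lt {S : Set X} {r : ℝ} (hS : S.Pairwise fun z z' ↦ r ≤ dist z z')
    (p : X) : {z ∈ S | dist z p < r}.Subsingleton := by
  rintro z ⟨hz, hzp⟩ z' ⟨hz', hzp'⟩
  by_contra hne
  have hlt : dist z z' < r :=
    (dist_triangle_max z p z').trans_lt (max_lt hzp ((dist_comm p z').trans_lt hzp'))
  exact (hS hz hz' hne).not_gt hlt

lemma infinite_setOf_forall_le_dist {S F : Set X} {r : ℝ} (hinf : S.Infinite)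
    (hS : S.Pairwise fun z z' ↦ r ≤ dist z z') (hF : F.Finite) :
    {z ∈ S | ∀ p ∈ F, r ≤ dist z p}.Infinite := by
  have hnear : (⋃ p ∈ F, {z ∈ S | dist z p < r}).Finite :=
    hF.biUnion fun p _ ↦ (subsingleton_setOf_dist_lt hS p).finite
  refine (hinf.sdiff hnear).mono fun z hz ↦ ⟨hz.1, fun p hp ↦ ?_⟩
  exact not_lt.1 fun hlt ↦ hz.2 (mem_biUnion hp ⟨hz.1, hlt⟩)

end Ultrametric

section Spectrum

variable {M : Type*} [MetricSpace M]

lemma UltraDist.isUltrametricDist (h : UltraDist M) : IsUltrametricDist M := ⟨h⟩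

variable [IsUltrametricDist M]

lemma mem_specAt_of_dist_le {a b : M} {r : ℝ} (hr : r ∈ SpecAt a) (hab : dist a b ≤ r) :
    r ∈ SpecAt b := by
  rcases hab.eq_or_lt with heq | hlt
  · exact ⟨a, (dist_comm b a).trans heq⟩
  · obtain ⟨c, rfl⟩ := hr
    refine ⟨c, ?_⟩
    rw [dist_comm] at hlt
    rw [IsUltrametricDist.dist_eq_max_of_dist_ne_dist b a c hlt.ne, max_eq_right hlt.le]

lemma specAt_subset_of_isometry_ball {b : M} {r : ℝ} {C : Set M} {f : ball b r → C}
    (hf : Isometry f) {o : ball b r} (ho : (o : M) = b) (hC : dist b (f o) ≤ r) :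
    SpecAt b ⊆ SpecAt (f o : M) := by
  intro q hq
  rcases lt_or_ge q r with hlt | hge
  · obtain ⟨u, rfl⟩ := hq
    refine ⟨f ⟨u, mem_ball'.2 hlt⟩, ?_⟩
    rw [← Subtype.dist_eq, hf.dist_eq, Subtype.dist_eq, ho]
  · exact mem_specAt_of_dist_le hq (hC.trans hge)

lemma diam_closedBall_of_mem_specAt {a : M} {r : ℝ} (hr : r ∈ SpecAt a) :
    diam (closedBall a r) = r := by
  obtain ⟨c, rfl⟩ := hr
  apply le_antisymm
  · refine diam_le_of_forall_dist_le dist_nonneg fun x hx y hy ↦ ?_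
    exact (dist_triangle_max x a y).trans (max_le hx (mem_closedBall'.1 hy))
  · exact dist_le_diam_of_mem isBounded_closedBall (mem_closedBall_self dist_nonneg)
      (mem_closedBall'.2 le_rfl)

lemma mem_sonOf_closedBall {b : M} {r : ℝ} (hr : r ∈ SpecAt b) {C : Set M} :
    C ∈ SonOf (closedBall b r) ↔ ∃ z ∈ closedBall b r, C = ball z r := by
  rw [SonOf, diam_closedBall_of_mem_specAt hr]
  rfl

lemma exists_eq_closedBall_and_eq_ball {B B' : Set M} (hB : B ∈ NervOf M) (hB' : B' ∈ SonOf B) :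
    ∃ b, ∃ r ∈ SpecAt b, B = closedBall b r ∧ B' = ball b r := by
  obtain ⟨a, r, hr, rfl⟩ := hB
  obtain ⟨b, hb, rfl⟩ := (mem_sonOf_closedBall hr).1 hB'
  exact ⟨b, r, mem_specAt_of_dist_le hr (mem_closedBall'.1 hb),
    IsUltrametricDist.closedBall_eq_of_mem hb, rfl⟩

end Spectrum

section FinSpecEmbedding

/-- A finite partial spec-embedding of `M` into itself, encoded by its graph: it preserves
distances and sends each point to one with a larger spectrum. These are the finite approximations
of an isometric self-embedding of `M`, ordered by extension. -/
def FinSpecEmbedding (M : Type*) [MetricSpace M] : Type _ :=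
  {s : Finset (M × M) // (∀ p ∈ s, ∀ q ∈ s, dist p.2 q.2 = dist p.1 q.1) ∧
    ∀ p ∈ s, SpecAt p.1 ⊆ SpecAt p.2}

variable {M : Type*} [MetricSpace M]

namespace FinSpecEmbedding

instance : Preorder (FinSpecEmbedding M) := inferInstanceAs (Preorder (Subtype _))

lemma exists_le_mem (s : FinSpecEmbedding M) {m w : M} (hspec : SpecAt m ⊆ SpecAt w)
    (hdist : ∀ p ∈ s.1, dist w p.2 = dist m p.1) :
    ∃ t : FinSpecEmbedding M, s ≤ t ∧ (m, w) ∈ t.1 := by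
  classical
  refine ⟨⟨insert (m, w) s.1, ?_, ?_⟩, Finset.subset_insert _ _, Finset.mem_insert_self _ _⟩
  · intro p hp q hq
    rcases Finset.mem_insert.1 hp with rfl | hp <;> rcases Finset.mem_insert.1 hq with rfl | hq
    · simp
    · exact hdist q hq
    · rw [dist_comm, hdist p hp, dist_comm]
    · exact s.2.1 p hp q hq
  · intro p hp
    rcases Finset.mem_insert.1 hp with rfl | hp
    exacts [hspec, s.2.2 p hp]

lemma isometry_and_extends_of_forall_mem_ideal (I : Ideal (FinSpecEmbedding M)) {g : M → M}
    (hg : ∀ m, ∃ t ∈ I, (m, g m) ∈ t.1) :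
    Isometry g ∧ ∀ t ∈ I, ∀ p ∈ t.1, g p.1 = p.2 := by
  have dist_eq : ∀ t ∈ I, ∀ p ∈ t.1, ∀ m, dist (g m) p.2 = dist m p.1 := by
    intro t ht p hp m
    obtain ⟨u, hu, hmu⟩ := hg m
    obtain ⟨v, -, htv, huv⟩ := I.directed t ht u hu
    exact v.2.1 _ (huv hmu) _ (htv hp)
  refine ⟨Isometry.of_dist_eq fun x y ↦ ?_, fun t ht p hp ↦ ?_⟩
  · obtain ⟨t, ht, hy⟩ := hg y
    exact dist_eq t ht _ hy x
  · rw [← dist_eq_zero, dist_eq t ht p hp, dist_self]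

end FinSpecEmbedding

namespace InfSpecExt

variable [IsUltrametricDist M]

lemma exists_forall_dist_eq (h : InfSpecExt M) (s : FinSpecEmbedding M) (m : M) :
    ∃ w, SpecAt m ⊆ SpecAt w ∧ ∀ p ∈ s.1, dist w p.2 = dist m p.1 := by
  rcases s.1.eq_empty_or_nonempty with hempty | hne
  · exact ⟨m, subset_rfl, by simp [hempty]⟩
  obtain ⟨y, hy, nearest⟩ := s.1.exists_min_image (fun p ↦ dist m p.1) hne
  rcases eq_or_ne m y.1 with rfl | hmy
  · exact ⟨y.2, s.2.2 y hy, s.2.1 y hy⟩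
  obtain ⟨S, hinf, hS, hpair⟩ := h m y.1 y.2 hmy (s.2.2 y hy)
  have hsep : S.Pairwise fun z z' ↦ dist m y.1 ≤ dist z z' :=
    fun z hz z' hz' hne ↦ (hpair z hz z' hz' hne).ge
  obtain ⟨w, hwS, hfar⟩ :=
    (infinite_setOf_forall_le_dist hinf hsep (s.1.finite_toSet.image Prod.snd)).nonempty
  have hwy : dist w y.2 = dist m y.1 := (dist_comm w y.2).trans (hS w hwS).1
  refine ⟨w, (hS w hwS).2, fun p hp ↦ ?_⟩
  have hwp : dist w y.2 ≤ dist w p.2 := hwy.trans_le (hfar p.2 ⟨p, hp, rfl⟩)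
  calc dist w p.2 = max (dist w y.2) (dist y.2 p.2) := dist_eq_max_of_dist_le hwp
    _ = max (dist m y.1) (dist y.1 p.1) := by rw [hwy, s.2.1 y hy p hp]
    _ = dist m p.1 := (dist_eq_max_of_dist_le (nearest p hp)).symm

theorem exists_isometry_extending [Countable M] (h : InfSpecExt M) (s : FinSpecEmbedding M) :
    ∃ g : M → M, Isometry g ∧ ∀ p ∈ s.1, g p.1 = p.2 := by
  cases nonempty_encodable M
  let definedAt (m : M) : Cofinal (FinSpecEmbedding M) :=
    { carrier := {t | ∃ w, (m, w) ∈ t.1}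
      isCofinal := fun t ↦ by
        obtain ⟨w, hspec, hdist⟩ := h.exists_forall_dist_eq t m
        obtain ⟨u, htu, hu⟩ := t.exists_le_mem hspec hdist
        exact ⟨u, ⟨w, hu⟩, htu⟩ }
  have hex (m : M) : ∃ w, ∃ t ∈ idealOfCofinals s definedAt, (m, w) ∈ t.1 := by
    obtain ⟨t, ⟨w, hw⟩, ht⟩ := cofinal_meets_idealOfCofinals s definedAt m
    exact ⟨w, t, ht, hw⟩
  choose g hg using hex
  obtain ⟨hiso, hext⟩ := FinSpecEmbedding.isometry_and_extends_of_forall_mem_ideal _ hg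
  exact ⟨g, hiso, hext s (mem_idealOfCofinals s definedAt)⟩

lemma exists_isometry_apply_eq [Countable M] (h : InfSpecExt M) {b z : M}
    (hbz : SpecAt b ⊆ SpecAt z) : ∃ g : M → M, Isometry g ∧ g b = z := by
  let s : FinSpecEmbedding M := ⟨{(b, z)}, by simp, by simpa using hbz⟩
  obtain ⟨g, hg, hs⟩ := h.exists_isometry_extending s
  exact ⟨g, hg, hs (b, z) (Finset.mem_singleton_self _)⟩

end InfSpecExt

end FinSpecEmbedding

section RecurrentSons

variable {M : Type*} [MetricSpace M]

/-- The sons of the closed ball of radius `r` around `b` that contain a spectral copy of `b`,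
that is, a point whose spectrum contains that of `b`. Meant for `r ∈ SpecAt b`, when the closed
ball belongs to the nerve and has diameter `r`. -/
def recurrentSons (b : M) (r : ℝ) : Set (Set M) :=
  {C | C ∈ SonOf (closedBall b r) ∧ ∃ z ∈ C, SpecAt b ⊆ SpecAt z}

lemma InfSpecExt.specExt (h : InfSpecExt M) : SpecExt M := by
  intro x y y' hxy hspec
  obtain ⟨S, hinf, hS, -⟩ := h x y y' hxy hspec
  obtain ⟨x', hx'⟩ := hinf.nonempty
  exact ⟨x', hS x' hx'⟩

variable [IsUltrametricDist M]

lemma infinite_recurrentSons_iff {b : M} {r : ℝ} (hr : 0 < r) (hb : r ∈ SpecAt b) :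
    (recurrentSons b r).Infinite ↔ ∃ S ⊆ closedBall b r, S.Infinite ∧
      (∀ z ∈ S, SpecAt b ⊆ SpecAt z) ∧ S.Pairwise fun z z' ↦ dist z z' = r := by
  constructor
  · intro hinf
    have hex (C : recurrentSons b r) :
        ∃ w ∈ closedBall b r, (C : Set M) = ball w r ∧ SpecAt b ⊆ SpecAt w := by
      obtain ⟨C, hC, w, hwC, hspec⟩ := C
      obtain ⟨c, hc, rfl⟩ := (mem_sonOf_closedBall hb).1 hC
      refine ⟨w, ?_, IsUltrametricDist.ball_eq_of_mem hwC, hspec⟩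
      rw [IsUltrametricDist.closedBall_eq_of_mem hc]
      exact ball_subset_closedBall hwC
    choose w hw hball hspec using hex
    have hinj : Function.Injective w := fun C C' h ↦
      Subtype.ext <| by rw [hball, hball, h]
    have := hinf.to_subtype
    refine ⟨range w, range_subset_iff.2 hw, infinite_range_of_injective hinj,
      forall_mem_range.2 hspec, ?_⟩
    rintro _ ⟨C, rfl⟩ _ ⟨C', rfl⟩ hne
    refine dist_eq_of_ball_ne (hw C) (hw C') fun h ↦ hne (congrArg w (Subtype.ext ?_))
    rw [hball, hball, h]
  · rintro ⟨S, hSb, hinf, hspec, hpair⟩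
    have hinj : S.InjOn (ball · r) := by
      intro z hz z' hz' h
      by_contra hne
      have hmem : z ∈ ball z' r := by
        rw [← show ball z r = ball z' r from h]
        exact mem_ball_self hr
      exact (mem_ball.1 hmem).ne (hpair hz hz' hne)
    refine infinite_of_injOn_mapsTo hinj (fun z hz ↦ ?_) hinf
    exact ⟨(mem_sonOf_closedBall hb).2 ⟨z, hSb hz, rfl⟩, z, mem_ball_self hr, hspec z hz⟩

theorem infSpecExt_iff_infinite_recurrentSons :
    InfSpecExt M ↔
      SpecExt M ∧ ∀ (b : M) (r : ℝ), 0 < r → r ∈ SpecAt b → (recurrentSons b r).Infinite := by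
  constructor
  · refine fun h ↦ ⟨h.specExt, fun b r hr hb ↦ (infinite_recurrentSons_iff hr hb).2 ?_⟩
    obtain ⟨e, rfl⟩ := hb
    obtain ⟨S, hinf, hS, hpair⟩ := h b e e (dist_pos.1 hr) subset_rfl
    refine ⟨S, fun z hz ↦ ?_, hinf, fun z hz ↦ (hS z hz).2, hpair⟩
    rw [mem_closedBall']
    exact (dist_triangle_max b e z).trans (max_le le_rfl (hS z hz).1.le)
  · rintro ⟨hext, hsons⟩ x y y' hxy hspec
    obtain ⟨x', hx', hxx'⟩ := hext x y y' hxy hspec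
    have hr : 0 < dist x y := dist_pos.2 hxy
    have hb : dist x y ∈ SpecAt x' := ⟨y', (dist_comm x' y').trans hx'⟩
    obtain ⟨S, hSx', hinf, hS, hpair⟩ :=
      (infinite_recurrentSons_iff hr hb).1 (hsons x' _ hr hb)
    have hfar := infinite_setOf_forall_le_dist hinf (hpair.mono' fun _ _ h ↦ h.ge)
      (finite_singleton y')
    refine ⟨_, hfar, fun z hz ↦ ⟨le_antisymm ?_ ?_, hxx'.trans (hS z hz.1)⟩,
      fun z hz z' hz' ↦ hpair hz.1 hz'.1⟩
    · exact (dist_triangle_max y' x' z).trans (max_le hx'.le (mem_closedBall'.1 (hSx' hz.1)))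
    · exact (hz.2 y' rfl).trans_eq (dist_comm z y')

lemma mem_recurrentSons_of_isometry {b : M} {r : ℝ} (hr : 0 < r) (hb : r ∈ SpecAt b)
    {C : Set M} (hC : C ∈ SonOf (closedBall b r)) {f : ball b r → C} (hf : Isometry f) :
    C ∈ recurrentSons b r := by
  obtain ⟨c, hc, rfl⟩ := (mem_sonOf_closedBall hb).1 hC
  let o : ball b r := ⟨b, mem_ball_self hr⟩
  refine ⟨hC, f o, (f o).2, specAt_subset_of_isometry_ball hf rfl ?_⟩
  exact (dist_triangle_max b c (f o)).trans
    (max_le (mem_closedBall'.1 hc) (mem_ball'.1 (f o).2).le)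

lemma InfSpecExt.exists_isometry_of_mem_recurrentSons [Countable M] (h : InfSpecExt M) {b : M}
    {r : ℝ} (hb : r ∈ SpecAt b) {C : Set M} (hC : C ∈ recurrentSons b r) :
    ∃ f : ball b r → C, Isometry f := by
  obtain ⟨hson, z, hz, hspec⟩ := hC
  obtain ⟨c, -, rfl⟩ := (mem_sonOf_closedBall hb).1 hson
  obtain ⟨g, hg, rfl⟩ := h.exists_isometry_apply_eq hspec
  rw [IsUltrametricDist.ball_eq_of_mem hz]
  exact ⟨(hg.mapsTo_ball b r).restrict, fun x y ↦ hg x y⟩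

end RecurrentSons

/-- For a countable ultrametric space, the infinite spec-extension
property is equivalent to the spec-extension property together with: each son of a
member of the nerve embeds into infinitely many sons. -/
theorem stmt_6 {M : Type*} [MetricSpace M] [Countable M] (hM : UltraDist M) :
    InfSpecExt M ↔
      (SpecExt M ∧ ∀ B ∈ NervOf M, 0 < Metric.diam B → ∀ B' ∈ SonOf B,
        {B'' | B'' ∈ SonOf B ∧ ∃ f : ↥B' → ↥B'', Isometry f}.Infinite) := by
  have := hM.isUltrametricDist
  constructor
  · intro h
    obtain ⟨hext, hsons⟩ := infSpecExt_iff_infinite_recurrentSons.1 h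
    refine ⟨hext, fun B hB hpos B' hB' ↦ ?_⟩
    obtain ⟨b, r, hb, rfl, rfl⟩ := exists_eq_closedBall_and_eq_ball hB hB'
    rw [diam_closedBall_of_mem_specAt hb] at hpos
    exact (hsons b r hpos hb).mono fun C hC ↦ ⟨hC.1, h.exists_isometry_of_mem_recurrentSons hb hC⟩
  · rintro ⟨hext, hsons⟩
    refine infSpecExt_iff_infinite_recurrentSons.2 ⟨hext, fun b r hr hb ↦ ?_⟩
    have hdiam := diam_closedBall_of_mem_specAt hb
    have hson : ball b r ∈ SonOf (closedBall b r) :=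
      (mem_sonOf_closedBall hb).2 ⟨b, mem_closedBall_self hr.le, rfl⟩
    refine (hsons _ ⟨b, r, hb, rfl⟩ (hdiam.symm ▸ hr) _ hson).mono ?_
    rintro C ⟨hC, f, hf⟩
    exact mem_recurrentSons_of_isometry hr hb hC hf
end

section
/- Let M be an indivisible ultrametric space with more than one element. Then the diameter r := δ(M) of M is attained (there exist a, b ∈ M with d(a,b) = r, so that M ∈ Nerv(M)), and for each son B of M there are infinitely many sons B' of M such that the metric subspace on B embeds isometrically into the metric subspace on B'. -/
/-!
An isometric self-map `f` of an ultrametric space preserves every distance `dist a x` exceeding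
`dist a (f a)`. If the distances from `a` had no greatest element, they would split into two
cofinal classes, each met by the image of every such `f`; colouring `x` by the class of `dist a x`
would then contradict indivisibility. So the diameter `r` is attained.

For `0 < r` the map `ball x r ↦ ball (f x) r` is well defined and injective. If there were
finitely many balls of radius `r`, then `f` would meet all of them, so indivisibility would force an
embedding into a single son, which is too small. Hence there are infinitely many sons, and `f` meets
infinitely many of them. Now colour the points by whether their son contains a copy of `B`: an
isometric self-map sends `B` into some son, so by indivisibility one of these maps only meets sons
containing a copy of `B`.
-/

open Metric Order Set

section Cofinal

variable {α : Type*} [LinearOrder α]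

variable (α) in
theorem exists_isCofinal_wellFoundedLT : ∃ s : Set α, IsCofinal s ∧ WellFoundedLT s := by
  let r : α → α → Prop := WellOrderingRel
  refine ⟨{a | ∀ b, r b a → b < a}, isCofinal_setOfPred_imp_lt r,
    ⟨Subrelation.wf ?_ (InvImage.wf Subtype.val (IsWellFounded.wf (r := r)))⟩⟩
  intro a b hab
  obtain h | h | h := trichotomous_of r a.1 b.1
  · exact h
  · exact absurd h (ne_of_lt hab)
  · exact absurd (a.2 b h) hab.asymm

variable [NoMaxOrder α]

theorem exists_isCofinal_isCofinal_compl_of_wellFoundedLT [WellFoundedLT α] :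
    ∃ s : Set α, IsCofinal s ∧ IsCofinal sᶜ := by
  let _ : SuccOrder α := .ofLinearWellFoundedLT α
  -- `a` lies an even number of successor steps above an element that is not a successor.
  let even (a : α) : Prop :=
    SuccOrder.prelimitRecOn a (fun _ _ p ↦ ¬p) (fun _ _ _ ↦ True)
  have even_succ (a : α) : even (succ a) ↔ ¬even a :=
    iff_of_eq (SuccOrder.prelimitRecOn_succ _ _ a)
  refine ⟨{a | even a}, fun a ↦ ?_, fun a ↦ ?_⟩ <;> by_cases ha : even a
  · exact ⟨a, ha, le_rfl⟩
  · exact ⟨succ a, (even_succ a).2 ha, le_succ a⟩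
  · exact ⟨succ a, fun h ↦ (even_succ a).1 h ha, le_succ a⟩
  · exact ⟨a, ha, le_rfl⟩

theorem exists_mem_gt_of_isCofinal {s : Set α} (hs : IsCofinal s) (a : α) : ∃ b ∈ s, a < b :=
  let ⟨b, hab⟩ := exists_gt a
  let ⟨c, hc, hbc⟩ := hs b
  ⟨c, hc, hab.trans_le hbc⟩

theorem noMaxOrder_coe_of_isCofinal {s : Set α} (hs : IsCofinal s) : NoMaxOrder s where
  exists_gt a :=
    let ⟨b, hb, hab⟩ := exists_mem_gt_of_isCofinal hs a.1
    ⟨⟨b, hb⟩, hab⟩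

variable (α) in
theorem exists_isCofinal_isCofinal_compl : ∃ s : Set α, IsCofinal s ∧ IsCofinal sᶜ := by
  obtain ⟨t, ht, _⟩ := exists_isCofinal_wellFoundedLT α
  have := noMaxOrder_coe_of_isCofinal ht
  obtain ⟨s, hs, hs'⟩ := exists_isCofinal_isCofinal_compl_of_wellFoundedLT (α := t)
  refine ⟨Subtype.val '' s, ht.trans hs, (ht.trans hs').mono ?_⟩
  rintro _ ⟨a, ha, rfl⟩ ⟨b, hb, hab⟩
  exact ha (Subtype.ext hab ▸ hb)

end Cofinal

section Isometry

variable {X Y : Type*} [PseudoMetricSpace X] [PseudoMetricSpace Y] [IsUltrametricDist Y] {r : ℝ}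

theorem dist_apply_eq_of_dist_apply_self_lt {f : Y → Y} (hf : Isometry f) {a x : Y}
    (h : dist a (f a) < dist a x) : dist a (f x) = dist a x := by
  rw [← hf.dist_eq a x] at h ⊢
  rw [IsUltrametricDist.dist_eq_max_of_dist_ne_dist _ _ _ h.ne, max_eq_right h.le]

theorem ball_eq_ball_iff_dist_lt (hr : 0 < r) {x y : Y} : ball x r = ball y r ↔ dist x y < r :=
  ⟨fun h ↦ mem_ball.1 (h ▸ mem_ball_self hr),
    fun h ↦ (IsUltrametricDist.ball_eq_of_mem (mem_ball.2 h)).symm⟩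

theorem thickening_image_ball_of_isometry {f : X → Y} (hf : Isometry f) (hr : 0 < r) (x : X) :
    thickening r (f '' ball x r) = ball (f x) r := by
  refine subset_antisymm ?_ (ball_subset_thickening (mem_image_of_mem f (mem_ball_self hr)) r)
  rw [thickening_eq_biUnion_ball, biUnion_image]
  refine iUnion₂_subset fun y hy ↦ ((ball_eq_ball_iff_dist_lt hr).2 ?_).subset
  rwa [hf.dist_eq]

variable [IsUltrametricDist X]

theorem injOn_thickening_image_range_ball {f : X → Y} (hf : Isometry f) (hr : 0 < r) :
    InjOn (fun s ↦ thickening r (f '' s)) (range fun x ↦ ball x r) := by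
  rintro _ ⟨x, rfl⟩ _ ⟨y, rfl⟩ h
  simp only [thickening_image_ball_of_isometry hf hr] at h
  rwa [ball_eq_ball_iff_dist_lt hr, hf.dist_eq, ← ball_eq_ball_iff_dist_lt hr] at h

theorem infinite_range_ball_apply {f : X → Y} (hf : Isometry f) (hr : 0 < r)
    (hinf : (range fun x : X ↦ ball x r).Infinite) : (range fun x ↦ ball (f x) r).Infinite := by
  have := hinf.image (injOn_thickening_image_range_ball hf hr)
  simpa only [← range_comp, Function.comp_def, thickening_image_ball_of_isometry hf hr] using this

theorem exists_apply_mem_ball_of_finite_range_ball {f : X → X} (hf : Isometry f) (hr : 0 < r)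
    (hfin : (range fun x : X ↦ ball x r).Finite) (c : X) : ∃ x, f x ∈ ball c r := by
  have hmaps : MapsTo (fun s ↦ thickening r (f '' s))
      (range fun x ↦ ball x r) (range fun x ↦ ball x r) := by
    rintro _ ⟨x, rfl⟩
    exact ⟨f x, (thickening_image_ball_of_isometry hf hr x).symm⟩
  obtain ⟨_, ⟨x, rfl⟩, hx⟩ := ((hfin.injOn_iff_bijOn_of_mapsTo hmaps).1
    (injOn_thickening_image_range_ball hf hr)).surjOn (mem_range_self c)
  have hball : ball (f x) r = ball c r := (thickening_image_ball_of_isometry hf hr x).symm.trans hx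
  exact ⟨x, hball ▸ mem_ball_self hr⟩

end Isometry

theorem sonOf_univ (M : Type*) [MetricSpace M] :
    SonOf (univ : Set M) = range fun a ↦ ball a (diam (univ : Set M)) := by
  ext S
  simp only [SonOf, mem_univ, true_and, mem_ofPred_eq, mem_range, eq_comm]

section Indivisible

variable {M : Type*} [MetricSpace M] [IsUltrametricDist M]

theorem diam_univ_eq_of_isGreatest_specAt {a : M} {r : ℝ} (h : IsGreatest (SpecAt a) r) :
    diam (univ : Set M) = r := by
  obtain ⟨⟨b, rfl⟩, hmax⟩ := h
  have dist_le (x y : M) : dist x y ≤ dist a b :=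
    (dist_triangle_max x a y).trans (max_le (hmax ⟨x, dist_comm a x⟩) (hmax ⟨y, rfl⟩))
  exact le_antisymm (diam_le_of_forall_dist_le dist_nonneg fun x _ y _ ↦ dist_le x y)
    (dist_le_diam_of_mem (isBounded_iff.2 ⟨_, fun x _ y _ ↦ dist_le x y⟩) trivial trivial)

theorem exists_dist_apply_mem_of_isCofinal {a : M} [NoMaxOrder (SpecAt a)] {f : M → M}
    (hf : Isometry f) {s : Set (SpecAt a)} (hs : IsCofinal s) :
    ∃ x, (⟨dist a (f x), f x, rfl⟩ : SpecAt a) ∈ s := by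
  obtain ⟨⟨_, x, rfl⟩, hxs, hx⟩ := exists_mem_gt_of_isCofinal hs ⟨dist a (f a), f a, rfl⟩
  refine ⟨x, ?_⟩
  simpa only [dist_apply_eq_of_dist_apply_self_lt hf hx] using hxs

namespace Indiv

theorem exists_isGreatest_specAt (hind : Indiv M) (a : M) : ∃ r, IsGreatest (SpecAt a) r := by
  by_contra! hmax
  have : NoMaxOrder (SpecAt a) := by
    refine ⟨fun ⟨r, hr⟩ ↦ ?_⟩
    have hr_not_ub : r ∉ upperBounds (SpecAt a) := fun h ↦ hmax r ⟨hr, h⟩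
    obtain ⟨t, ht, hrt⟩ : ∃ t ∈ SpecAt a, r < t := by
      simpa only [mem_upperBounds, not_forall, not_le, exists_prop] using hr_not_ub
    exact ⟨⟨t, ht⟩, hrt⟩
  obtain ⟨s, hs, hs'⟩ := exists_isCofinal_isCofinal_compl (SpecAt a)
  obtain ⟨f, hf, hfs⟩ | ⟨f, hf, hfs⟩ := hind {x | (⟨dist a x, x, rfl⟩ : SpecAt a) ∈ s}
  · obtain ⟨x, hx⟩ := exists_dist_apply_mem_of_isCofinal hf hs'
    exact hx (hfs x)
  · obtain ⟨x, hx⟩ := exists_dist_apply_mem_of_isCofinal hf hs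
    exact hfs x hx

theorem isGreatest_specAt_diam_univ (hind : Indiv M) (a : M) :
    IsGreatest (SpecAt a) (diam (univ : Set M)) := by
  obtain ⟨r, hr⟩ := hind.exists_isGreatest_specAt a
  rwa [diam_univ_eq_of_isGreatest_specAt hr]

theorem diam_univ_pos [Nontrivial M] (hind : Indiv M) : 0 < diam (univ : Set M) := by
  obtain ⟨a, b, hab⟩ := exists_pair_ne M
  exact (dist_pos.2 hab).trans_le ((hind.isGreatest_specAt_diam_univ a).2 ⟨b, rfl⟩)

theorem infinite_range_ball (hind : Indiv M) {r : ℝ} (hr : 0 < r) {a b : M}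
    (hab : r ≤ dist a b) : (range fun x : M ↦ ball x r).Infinite := by
  intro hfin
  obtain ⟨f, hf, hfa⟩ | ⟨f, hf, hfa⟩ := hind (ball a r)
  · have hlt : dist (f a) (f b) < r := by
      rw [← ball_eq_ball_iff_dist_lt hr, ← IsUltrametricDist.ball_eq_of_mem (hfa a),
        ← IsUltrametricDist.ball_eq_of_mem (hfa b)]
    exact hab.not_gt (hf.dist_eq a b ▸ hlt)
  · obtain ⟨x, hx⟩ := exists_apply_mem_ball_of_finite_range_ball hf hr hfin a
    exact hfa x hx

theorem infinite_setOf_ball_embedding (hind : Indiv M) {r : ℝ} (hr : 0 < r)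
    (hinf : (range fun x : M ↦ ball x r).Infinite) (c : M) :
    {B | B ∈ (range fun x : M ↦ ball x r) ∧ ∃ f : ball c r → B, Isometry f}.Infinite := by
  obtain ⟨f, hf, hfc⟩ | ⟨f, hf, hfc⟩ := hind {x | ∃ g : ball c r → ball x r, Isometry g}
  · refine (infinite_range_ball_apply hf hr hinf).mono ?_
    rintro _ ⟨x, rfl⟩
    exact ⟨mem_range_self (f x), hfc x⟩
  · have hmaps : MapsTo f (ball c r) (ball (f c) r) := hf.mapsTo_ball c r
    exact absurd ⟨hmaps.restrict, fun x y ↦ hf x y⟩ (hfc c)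

end Indiv

end Indivisible

/-- In an indivisible ultrametric space with more than one element the
diameter is attained, and each son of the space embeds into infinitely many sons. -/
theorem stmt_8 {M : Type*} [MetricSpace M] [Nontrivial M]
    (hM : UltraDist M) (hind : Indiv M) :
    (∃ a b : M, dist a b = Metric.diam (Set.univ : Set M)) ∧
    ∀ B ∈ SonOf (Set.univ : Set M),
      {B' | B' ∈ SonOf (Set.univ : Set M) ∧ ∃ f : ↥B → ↥B', Isometry f}.Infinite := by
  have : IsUltrametricDist M := ⟨hM⟩
  obtain ⟨a⟩ := ‹Nontrivial M›.to_nonempty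
  obtain ⟨b, hab⟩ := (hind.isGreatest_specAt_diam_univ a).1
  have sons_infinite := hind.infinite_range_ball hind.diam_univ_pos hab.ge
  refine ⟨⟨a, b, hab⟩, ?_⟩
  rw [sonOf_univ]
  rintro _ ⟨c, rfl⟩
  exact hind.infinite_setOf_ball_embedding hind.diam_univ_pos sons_infinite c
end

section
/- Let M be an indivisible metric space. Then for every x ∈ M, M embeds isometrically into the metric subspace induced on M(x) := {y ∈ M : Spec(M,x) ⊆ Spec(M,y)}. -/
theorem specAt_subset_specAt_of_isometry {M N : Type*} [MetricSpace M] [MetricSpace N] {f : M → N}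
    (hf : Isometry f) (x : M) : SpecAt x ⊆ SpecAt (f x) := by
  rintro _ ⟨y, rfl⟩
  exact ⟨f y, hf.dist_eq x y⟩

theorem Indiv.exists_isometry_mem {M : Type*} [MetricSpace M] (hind : Indiv M) {A : Set M}
    (hA : ∀ f : M → M, Isometry f → ∃ x, f x ∈ A) :
    ∃ f : M → M, Isometry f ∧ ∀ x, f x ∈ A :=
  (hind A).resolve_right fun ⟨f, hf, hfA⟩ =>
    let ⟨x, hx⟩ := hA f hf
    hfA x hx

/-- An indivisible metric space embeds isometrically into the subspace
of points whose spectrum contains that of any fixed point x. -/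
theorem stmt_9 {M : Type*} [MetricSpace M] (hind : Indiv M) :
    ∀ x : M, ∃ f : M → M, Isometry f ∧ ∀ y : M, f y ∈ {z | SpecAt x ⊆ SpecAt z} := by
  intro x
  exact hind.exists_isometry_mem fun f hf => ⟨x, specAt_subset_specAt_of_isometry hf x⟩
end

section
/- Let λ be a linearly ordered set and w : λ → ℝ a strictly antitone function with w(μ) > 0 for all μ ∈ λ. On the set M of finitely supported functions f : λ → ℕ, define d(f,g) := 0 if f = g, and otherwise d(f,g) := w(μ) where μ is the least element of the (finite, nonempty) set {ν ∈ λ : f(ν) ≠ g(ν)}. Then d is an ultrametric distance on M (d is symmetric, vanishes exactly on the diagonal, and d(f,h) ≤ max(d(f,g), d(g,h)) for all f,g,h), the spectrum of (M,d) equals w(λ) ∪ {0}, and pointwise addition is compatible with d: d(h+f, h+g) = d(f,g) for all f,g,h ∈ M. -/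
/-!
Let `δ(f, g)` be the least index at which `f` and `g` differ, read as `⊤` when `f = g`, and extend
the weight by `w ⊤ = 0`. Then `d(f, g) = w (δ(f, g))` with no case distinction, and every claim is
the image under the antitone `w` of a fact about `δ`. In particular `f μ ≠ h μ` forces `f μ ≠ g μ`
or `g μ ≠ h μ`, so `min (δ(f, g)) (δ(g, h)) ≤ δ(f, h)`, which `w` turns into the strong triangle
inequality.
-/

section FirstDiff

variable {ι N : Type*} [LinearOrder ι] [DecidableEq N]

/-- The least index at which two finitely supported functions differ, with value `⊤` when they are
equal. -/
def firstDiff [Zero N] (f g : ι →₀ N) : WithTop ι :=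
  (f.neLocus g).min

section Zero

variable [Zero N]

theorem firstDiff_eq_top_iff {f g : ι →₀ N} : firstDiff f g = ⊤ ↔ f = g :=
  Finset.min_eq_top.trans Finsupp.neLocus_eq_empty

theorem isLeast_of_firstDiff_eq_coe {f g : ι →₀ N} {μ : ι} (h : firstDiff f g = μ) :
    IsLeast {ν | f ν ≠ g ν} μ :=
  ⟨Finsupp.mem_neLocus.1 (Finset.mem_of_min h),
    fun _ hν ↦ Finset.min_le_of_eq (Finsupp.mem_neLocus.2 hν) h⟩

theorem firstDiff_comm (f g : ι →₀ N) : firstDiff f g = firstDiff g f :=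
  congrArg Finset.min (Finsupp.neLocus_comm f g)

theorem min_firstDiff_le (f g h : ι →₀ N) :
    min (firstDiff f g) (firstDiff g h) ≤ firstDiff f h := by
  have neLocus_subset : f.neLocus h ⊆ f.neLocus g ∪ g.neLocus h := fun μ hμ ↦ by
    simp only [Finset.mem_union, Finsupp.mem_neLocus] at hμ ⊢
    exact (hμ.ne_or_ne (g μ)).imp_right Ne.symm
  calc
    min (firstDiff f g) (firstDiff g h) = (f.neLocus g ∪ g.neLocus h).min :=
      Finset.min_union.symm
    _ ≤ firstDiff f h := Finset.min_mono neLocus_subset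

theorem exists_firstDiff_zero_eq [Nontrivial N] (t : WithTop ι) :
    ∃ f : ι →₀ N, firstDiff f 0 = t := by
  cases t with
  | top => exact ⟨0, firstDiff_eq_top_iff.2 rfl⟩
  | coe μ =>
    obtain ⟨a, ha⟩ := exists_ne (0 : N)
    refine ⟨Finsupp.single μ a, ?_⟩
    rw [firstDiff, Finsupp.neLocus_zero_right, Finsupp.support_single μ ha,
      Finset.min_singleton]

end Zero

theorem firstDiff_add_left [AddLeftCancelMonoid N] (h f g : ι →₀ N) :
    firstDiff (h + f) (h + g) = firstDiff f g :=
  congrArg Finset.min (Finsupp.neLocus_add_left h f g)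

end FirstDiff

section ExtendTopZero

variable {ι R : Type*} [Zero R] {w : ι → R}

/-- The extension of a weight on `ι` to `WithTop ι` by the value `0` at `⊤`. -/
def extendTopZero (w : ι → R) : WithTop ι → R :=
  WithTop.recTopCoe 0 w

theorem extendTopZero_eq_zero_iff (hw : ∀ μ, w μ ≠ 0) {t : WithTop ι} :
    extendTopZero w t = 0 ↔ t = ⊤ := by
  cases t with
  | top => exact iff_of_true rfl rfl
  | coe μ => exact iff_of_false (hw μ) (WithTop.coe_ne_top)

theorem antitone_extendTopZero [Preorder ι] [Preorder R] (hw : Antitone w) (hnonneg : 0 ≤ w) :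
    Antitone (extendTopZero w) :=
  WithTop.monotone_iff (β := Rᵒᵈ).2 ⟨hw, hnonneg⟩

theorem range_extendTopZero (w : ι → R) : Set.range (extendTopZero w) = Set.range w ∪ {0} :=
  (Option.range_eq (extendTopZero w)).trans Set.union_singleton.symm

end ExtendTopZero

section FirstDiffDist

variable {ι N R : Type*} [LinearOrder ι] [DecidableEq N] [Zero R] {w : ι → R}

/-- The valuation distance with weight `w`: the weight of the first index at which two finitely
supported functions differ, and `0` when they are equal. -/
def firstDiffDist [Zero N] (w : ι → R) (f g : ι →₀ N) : R :=
  extendTopZero w (firstDiff f g)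

section Zero

variable [Zero N]

theorem eq_firstDiffDist {d : (ι →₀ N) → (ι →₀ N) → R} (hdiag : ∀ f, d f f = 0)
    (hdw : ∀ f g μ, IsLeast {ν | f ν ≠ g ν} μ → d f g = w μ) : d = firstDiffDist w := by
  funext f g
  rw [firstDiffDist]
  cases hfg : firstDiff f g with
  | top => exact firstDiff_eq_top_iff.1 hfg ▸ hdiag f
  | coe μ => exact hdw f g μ (isLeast_of_firstDiff_eq_coe hfg)

theorem firstDiffDist_comm (w : ι → R) (f g : ι →₀ N) :
    firstDiffDist w f g = firstDiffDist w g f :=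
  congrArg (extendTopZero w) (firstDiff_comm f g)

theorem firstDiffDist_eq_zero_iff (hw : ∀ μ, w μ ≠ 0) {f g : ι →₀ N} :
    firstDiffDist w f g = 0 ↔ f = g :=
  (extendTopZero_eq_zero_iff hw).trans firstDiff_eq_top_iff

theorem firstDiffDist_le_max [LinearOrder R] (hw : Antitone w) (hnonneg : 0 ≤ w)
    (f g h : ι →₀ N) :
    firstDiffDist w f h ≤ max (firstDiffDist w f g) (firstDiffDist w g h) := by
  have hanti := antitone_extendTopZero hw hnonneg
  calc
    firstDiffDist w f h ≤ extendTopZero w (min (firstDiff f g) (firstDiff g h)) :=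
      hanti (min_firstDiff_le f g h)
    _ = max (firstDiffDist w f g) (firstDiffDist w g h) := hanti.map_min

theorem setOf_firstDiffDist_eq [Nontrivial N] (w : ι → R) :
    {r | ∃ f g : ι →₀ N, firstDiffDist w f g = r} = Set.range w ∪ {0} := by
  rw [← range_extendTopZero]
  ext r
  constructor
  · rintro ⟨f, g, rfl⟩
    exact ⟨firstDiff f g, rfl⟩
  · rintro ⟨t, rfl⟩
    obtain ⟨f, hf⟩ := exists_firstDiff_zero_eq (N := N) t
    exact ⟨f, 0, congrArg (extendTopZero w) hf⟩

end Zero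

theorem firstDiffDist_add_left [AddLeftCancelMonoid N] (w : ι → R) (h f g : ι →₀ N) :
    firstDiffDist w (h + f) (h + g) = firstDiffDist w f g :=
  congrArg (extendTopZero w) (firstDiff_add_left h f g)

end FirstDiffDist

theorem stmt_12_general {ι N R : Type*} [LinearOrder ι] [AddLeftCancelMonoid N] [Nontrivial N]
    [LinearOrder R] [Zero R] (w : ι → R) (hw : Antitone w) (hpos : ∀ μ, 0 < w μ)
    (d : (ι →₀ N) → (ι →₀ N) → R) (hdiag : ∀ f, d f f = 0)
    (hdw : ∀ f g μ, IsLeast {ν | f ν ≠ g ν} μ → d f g = w μ) :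
    (∀ f g, d f g = d g f) ∧
    (∀ f g, d f g = 0 ↔ f = g) ∧
    (∀ f g h, d f h ≤ max (d f g) (d g h)) ∧
    {r | ∃ f g, d f g = r} = Set.range w ∪ {0} ∧
    (∀ f g h, d (h + f) (h + g) = d f g) := by
  classical
  obtain rfl := eq_firstDiffDist hdiag hdw
  exact ⟨firstDiffDist_comm w,
    fun _ _ ↦ firstDiffDist_eq_zero_iff fun μ ↦ (hpos μ).ne',
    firstDiffDist_le_max hw fun μ ↦ (hpos μ).le,
    setOf_firstDiffDist_eq w,
    fun f g h ↦ firstDiffDist_add_left w h f g⟩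

/-- The valuation distance on finitely supported functions λ → ℕ is an
ultrametric distance, its spectrum is w(λ) ∪ {0}, and pointwise addition is
compatible with it. Here d is any function satisfying the defining clauses. -/
theorem stmt_12 {ι : Type*} [LinearOrder ι] (w : ι → ℝ)
    (hw : StrictAnti w) (hpos : ∀ μ, 0 < w μ)
    (d : (ι →₀ ℕ) → (ι →₀ ℕ) → ℝ)
    (hdiag : ∀ f, d f f = 0)
    (hdw : ∀ f g : ι →₀ ℕ, ∀ μ : ι, IsLeast {ν : ι | f ν ≠ g ν} μ → d f g = w μ) :
    (∀ f g : ι →₀ ℕ, d f g = d g f) ∧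
    (∀ f g : ι →₀ ℕ, d f g = 0 ↔ f = g) ∧
    (∀ f g h : ι →₀ ℕ, d f h ≤ max (d f g) (d g h)) ∧
    {r : ℝ | ∃ f g : ι →₀ ℕ, d f g = r} = Set.range w ∪ {0} ∧
    (∀ f g h : ι →₀ ℕ, d (h + f) (h + g) = d f g) := by
  exact stmt_12_general w hw.antitone hpos d hdiag hdw
end

section
/- Let λ be a linearly ordered set and w : λ → ℝ strictly antitone with w(μ) > 0 for all μ, and let M be the set of finitely supported functions f : λ → ℕ with the ultrametric distance d(f,g) := w(least ν with f(ν) ≠ g(ν)) for f ≠ g and d(f,f) := 0. Let X ⊆ M and let X* be the set of all finite sums of members of X (including the empty sum 0). If there is no infinite sequence of sets of the form C_n = {g ∈ X : d(f_n, g) ≤ d(f_n, f'_n)} with f_n, f'_n ∈ X and C_n ⊊ C_{n+1} for all n, then there is no infinite sequence of sets of the form D_n = {g ∈ X* : d(f_n, g) ≤ d(f_n, f'_n)} with f_n, f'_n ∈ X* and D_n ⊊ D_{n+1} for all n. (Equivalently: if the meet-tree generated by X is well-founded, then the meet-tree generated by X* is well-founded.) -/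
/-!
For an ultrametric, the tree of balls of `X` is well-founded iff no point of `X` sees a strictly
increasing sequence of distances to points of `X`; in that case no point outside `X` sees one
either, since as soon as the distances from `h` to points of `X` increase they are distances from
a point of `X`.

Now let `μ` be the first index at which `a` and a finite sum `g` of members of `X` differ, and
suppose `a μ = 0`. Then `g μ ≠ 0`, so some summand `y ∈ X` of `g` has `y μ ≠ 0`. Cutting `y` off
below `μ` gives `h ≤ a` with `d h y = d a g`. Hence every distance from `a` to a finite sum is `0`,
the weight of an index in the finite support of `a`, or a distance to `X` from one of the finitely
many `h ≤ a`.
-/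

open Set

theorem wellFoundedOn_of_forall_wellFoundedOn_sep {α : Type*} {r : α → α → Prop}
    [IsStrictOrder α r] {s : Set α} (h : ∀ x ∈ s, {y ∈ s | r y x}.WellFoundedOn r) :
    s.WellFoundedOn r := by
  refine wellFoundedOn_iff_no_descending_seq.2 fun f hf => ?_
  let tail : ((· > ·) : ℕ → ℕ → Prop) ↪r r :=
    RelEmbedding.natGT (fun n => f (n + 1)) fun n => f.map_rel_iff.2 (n + 1).lt_succ_self
  exact wellFoundedOn_iff_no_descending_seq.1 (h (f 0) (hf 0)) tail fun n =>
    ⟨hf (n + 1), f.map_rel_iff.2 n.succ_pos⟩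

section Balls

variable {M Γ : Type*}

/-- The trace on `X` of the closed ball of center `a` and radius `r`, for a distance function `d`
with values in an arbitrary ordered type. -/
def closedBallIn [LE Γ] (d : M → M → Γ) (X : Set M) (a : M) (r : Γ) : Set M :=
  {x ∈ X | d a x ≤ r}

/-- The closed balls of the subspace `X` whose radius is realized as a distance from their center.
The tree of balls of `X` is this set ordered by reverse inclusion, so its well-foundedness reads
`(realizedBalls d X).WellFoundedOn (· > ·)`. -/
def realizedBalls [LE Γ] (d : M → M → Γ) (X : Set M) : Set (Set M) :=
  image2 (fun a b => closedBallIn d X a (d a b)) X X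

/-- `d` is an ultrametric up to the requirements that involve a zero: it is symmetric and satisfies
the strong triangle inequality. -/
structure IsUltrametric [LinearOrder Γ] (d : M → M → Γ) : Prop where
  symm (x y : M) : d x y = d y x
  le_max (x y z : M) : d x z ≤ max (d x y) (d y z)

theorem wellFoundedOn_realizedBalls_iff_not_exists_chain [LE Γ] {d : M → M → Γ} {X : Set M} :
    (realizedBalls d X).WellFoundedOn (· > ·) ↔
      ¬∃ f f' : ℕ → M, (∀ n, f n ∈ X) ∧ (∀ n, f' n ∈ X) ∧
        ∀ n, closedBallIn d X (f n) (d (f n) (f' n)) ⊂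
          closedBallIn d X (f (n + 1)) (d (f (n + 1)) (f' (n + 1))) := by
  rw [wellFoundedOn_iff_no_descending_seq, ← not_exists_not, not_iff_not]
  constructor
  · rintro ⟨C, hC⟩
    choose f hf f' hf' hball using not_not.1 hC
    refine ⟨f, f', hf, hf', fun n => ?_⟩
    simpa only [hball] using C.map_rel_iff.2 n.lt_succ_self
  · rintro ⟨f, f', hf, hf', hlt⟩
    exact ⟨RelEmbedding.natGT _ hlt, not_not.2 fun n => mem_image2_of_mem (hf n) (hf' n)⟩

theorem closedBallIn_mono [Preorder Γ] (d : M → M → Γ) (X : Set M) (a : M) :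
    Monotone (closedBallIn d X a) :=
  fun _ _ hrs _ hx => ⟨hx.1, hx.2.trans hrs⟩

theorem closedBallIn_ssubset_of_lt [Preorder Γ] {d : M → M → Γ} {X : Set M} {a : M} {r s : Γ}
    (hs : s ∈ d a '' X) (hrs : r < s) : closedBallIn d X a r ⊂ closedBallIn d X a s := by
  obtain ⟨b, hb, rfl⟩ := hs
  exact ⟨closedBallIn_mono d X a hrs.le, fun hsub => (hsub ⟨hb, le_rfl⟩).2.not_gt hrs⟩

namespace IsUltrametric

variable [LinearOrder Γ] {d : M → M → Γ} {X : Set M} {a b x y z : M} {r : Γ}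

theorem self_le (hd : IsUltrametric d) (x y : M) : d x x ≤ d x y := by
  simpa only [hd.symm y x, max_self] using hd.le_max x y x

theorem dist_eq_of_dist_lt (hd : IsUltrametric d) (h : d x y < d x z) : d y z = d x z := by
  apply le_antisymm
  · simpa only [hd.symm y x, max_eq_right h.le] using hd.le_max y x z
  · exact (le_max_iff.1 (hd.le_max x y z)).resolve_left h.not_ge

theorem closedBallIn_eq_of_dist_le (hd : IsUltrametric d) (h : d a b ≤ r) :
    closedBallIn d X a r = closedBallIn d X b r := by
  ext x
  refine and_congr_right fun _ => ⟨fun hx => ?_, fun hx => ?_⟩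
  · exact (hd.le_max b a x).trans (max_le (hd.symm a b ▸ h) hx)
  · exact (hd.le_max a b x).trans (max_le h hx)

theorem dist_mem_image_of_dist_le (hd : IsUltrametric d) (ha : a ∈ X) (hb : b ∈ X)
    (h : d a x ≤ d a b) : d a b ∈ d x '' X := by
  obtain heq | hlt := h.eq_or_lt
  · exact ⟨a, ha, by rw [hd.symm, heq]⟩
  · exact ⟨b, hb, hd.dist_eq_of_dist_lt hlt⟩

theorem mem_image_closedBallIn_of_mem (hd : IsUltrametric d) {C : Set M}
    (hC : C ∈ realizedBalls d X) (hx : x ∈ C) : C ∈ closedBallIn d X x '' (d x '' X) := by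
  obtain ⟨a, ha, b, hb, rfl⟩ := hC
  exact ⟨d a b, hd.dist_mem_image_of_dist_le ha hb hx.2,
    (hd.closedBallIn_eq_of_dist_le hx.2).symm⟩

theorem wellFoundedOn_realizedBalls_iff (hd : IsUltrametric d) :
    (realizedBalls d X).WellFoundedOn (· > ·) ↔ ∀ a ∈ X, (d a '' X).WellFoundedOn (· > ·) := by
  constructor
  · intro hballs a ha
    have hcentered : (closedBallIn d X a '' (d a '' X)).WellFoundedOn (· > ·) := by
      refine hballs.subset ?_
      rintro _ ⟨_, ⟨b, hb, rfl⟩, rfl⟩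
      exact mem_image2_of_mem ha hb
    exact (wellFoundedOn_image.1 hcentered).mono' fun r hr s _ hsr =>
      closedBallIn_ssubset_of_lt hr hsr
  · intro hdist
    refine wellFoundedOn_of_forall_wellFoundedOn_sep ?_
    rintro _ ⟨a, ha, b, _, rfl⟩
    have hcentered : (closedBallIn d X a '' (d a '' X)).WellFoundedOn (· > ·) :=
      wellFoundedOn_image.2 <| (hdist a ha).mono' fun _ _ _ _ h =>
        (closedBallIn_mono d X a).reflect_lt h
    exact hcentered.subset fun C hC =>
      hd.mem_image_closedBallIn_of_mem hC.1 (hC.2.le ⟨ha, hd.self_le a b⟩)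

theorem wellFoundedOn_dist_image (hd : IsUltrametric d)
    (hX : ∀ a ∈ X, (d a '' X).WellFoundedOn (· > ·)) (x : M) :
    (d x '' X).WellFoundedOn (· > ·) := by
  refine wellFoundedOn_of_forall_wellFoundedOn_sep ?_
  rintro _ ⟨a, ha, rfl⟩
  refine (hX a ha).subset ?_
  rintro _ ⟨⟨b, hb, rfl⟩, hlt⟩
  exact ⟨b, hb, hd.dist_eq_of_dist_lt hlt⟩

end IsUltrametric

end Balls

/-- `d` is the distance between finitely supported functions that assigns to two distinct functions
the weight `w μ` of the least index `μ` at which they differ. -/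
structure IsFirstDifferenceDist {ι R Γ : Type*} [Preorder ι] [Zero R] [Zero Γ] (w : ι → Γ)
    (d : (ι →₀ R) → (ι →₀ R) → Γ) : Prop where
  self (f : ι →₀ R) : d f f = 0
  eq_weight (f g : ι →₀ R) (μ : ι) : IsLeast {ν | f ν ≠ g ν} μ → d f g = w μ

theorem exists_isLeast_ne {ι R : Type*} [LinearOrder ι] [Zero R] {f g : ι →₀ R} (h : f ≠ g) :
    ∃ μ, IsLeast {ν | f ν ≠ g ν} μ := by
  classical
  rw [← Finsupp.coe_neLocus]
  exact ⟨_, Finset.isLeast_min' _ (Finsupp.nonempty_neLocus_iff.2 h)⟩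

theorem exists_mem_le_apply_ne_zero_of_mem_closure {ι R : Type*} [AddCommMonoid R] [PartialOrder R]
    [CanonicallyOrderedAdd R] {X : Set (ι →₀ R)} {g : ι →₀ R} {μ : ι}
    (hg : g ∈ AddSubmonoid.closure X) (hμ : g μ ≠ 0) : ∃ y ∈ X, y ≤ g ∧ y μ ≠ 0 := by
  induction hg using AddSubmonoid.closure_induction with
  | mem x hx => exact ⟨x, hx, le_rfl, hμ⟩
  | zero => exact absurd rfl hμ
  | add a b _ _ iha ihb =>
    by_cases ha : a μ = 0
    · obtain ⟨y, hy, hle, hne⟩ := ihb (by simpa only [Finsupp.add_apply, ha, zero_add] using hμ)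
      exact ⟨y, hy, fun ν => (hle ν).trans le_add_self, hne⟩
    · obtain ⟨y, hy, hle, hne⟩ := iha ha
      exact ⟨y, hy, fun ν => (hle ν).trans le_self_add, hne⟩

theorem exists_le_isLeast_ne_of_mem_closure {ι R : Type*} [LinearOrder ι] [AddCommMonoid R]
    [PartialOrder R] [CanonicallyOrderedAdd R] {X : Set (ι →₀ R)} {a g : ι →₀ R} {μ : ι}
    (hg : g ∈ AddSubmonoid.closure X) (hμ : IsLeast {ν | a ν ≠ g ν} μ) (ha : a μ = 0) :
    ∃ y ∈ X, ∃ h ≤ a, IsLeast {ν | h ν ≠ y ν} μ := by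
  have hgμ : g μ ≠ 0 := fun h => hμ.1 (ha.trans h.symm)
  obtain ⟨y, hy, hyg, hyμ⟩ := exists_mem_le_apply_ne_zero_of_mem_closure hg hgμ
  have cut_lt {ν : ι} (hν : ν < μ) : y.filter (· < μ) ν = y ν :=
    Finsupp.filter_apply_pos (· < μ) y hν
  have cut_not_lt {ν : ι} (hν : ¬ν < μ) : y.filter (· < μ) ν = 0 :=
    Finsupp.filter_apply_neg (· < μ) y hν
  refine ⟨y, hy, y.filter (· < μ), fun ν => ?_, ?_, fun ν hν => ?_⟩
  · by_cases hν : ν < μ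
    · have hag : a ν = g ν := not_not.1 fun hne => (hμ.2 hne).not_gt hν
      exact (cut_lt hν).trans_le ((hyg ν).trans_eq hag.symm)
    · exact (cut_not_lt hν).trans_le zero_le
  · exact (cut_not_lt (lt_irrefl μ)).trans_ne hyμ.symm
  · exact not_lt.1 fun hlt => hν (cut_lt hlt)

namespace IsFirstDifferenceDist

variable {ι R Γ : Type*} [LinearOrder ι] [Zero Γ] {w : ι → Γ}

section Zero

variable [Zero R] {d : (ι →₀ R) → (ι →₀ R) → Γ}

theorem nonneg [Preorder Γ] (hd : IsFirstDifferenceDist w d) (hpos : ∀ μ, 0 ≤ w μ)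
    (f g : ι →₀ R) : 0 ≤ d f g := by
  obtain rfl | hfg := eq_or_ne f g
  · exact (hd.self f).ge
  · obtain ⟨μ, hμ⟩ := exists_isLeast_ne hfg
    exact (hpos μ).trans_eq (hd.eq_weight f g μ hμ).symm

theorem weight_le [Preorder Γ] (hd : IsFirstDifferenceDist w d) (hw : Antitone w)
    {f g : ι →₀ R} {μ : ι} (h : f μ ≠ g μ) : w μ ≤ d f g := by
  obtain ⟨ν, hν⟩ := exists_isLeast_ne fun hfg => h (DFunLike.congr_fun hfg μ)
  exact (hw (hν.2 h)).trans_eq (hd.eq_weight f g ν hν).symm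

theorem isUltrametric [LinearOrder Γ] (hd : IsFirstDifferenceDist w d) (hw : Antitone w)
    (hpos : ∀ μ, 0 ≤ w μ) : IsUltrametric d where
  symm f g := by
    obtain rfl | hfg := eq_or_ne f g
    · rfl
    · obtain ⟨μ, hμ⟩ := exists_isLeast_ne hfg
      rw [hd.eq_weight f g μ hμ, hd.eq_weight g f μ (by simpa only [ne_comm] using hμ)]
  le_max f g h := by
    obtain rfl | hfh := eq_or_ne f h
    · exact (hd.self f).trans_le (le_max_of_le_left (hd.nonneg hpos f g))
    · obtain ⟨μ, hμ⟩ := exists_isLeast_ne hfh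
      rw [hd.eq_weight f h μ hμ]
      obtain hfg | hgh := hμ.1.ne_or_ne (g μ)
      · exact le_max_of_le_left (hd.weight_le hw hfg)
      · exact le_max_of_le_right (hd.weight_le hw hgh.symm)

end Zero

variable [AddCommMonoid R] [PartialOrder R] [CanonicallyOrderedAdd R]
  {d : (ι →₀ R) → (ι →₀ R) → Γ}

theorem dist_image_closure_subset (hd : IsFirstDifferenceDist w d) (X : Set (ι →₀ R))
    (a : ι →₀ R) :
    d a '' (AddSubmonoid.closure X : Set (ι →₀ R)) ⊆
      insert 0 (w '' a.support) ∪ ⋃ h ≤ a, d h '' X := by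
  rintro _ ⟨g, hg, rfl⟩
  obtain rfl | hag := eq_or_ne a g
  · exact Or.inl (Or.inl (hd.self a))
  obtain ⟨μ, hμ⟩ := exists_isLeast_ne hag
  rw [hd.eq_weight a g μ hμ]
  by_cases ha : a μ = 0
  · obtain ⟨y, hy, h, hha, hleast⟩ := exists_le_isLeast_ne_of_mem_closure hg hμ ha
    exact Or.inr (mem_iUnion₂.2 ⟨h, hha, y, hy, hd.eq_weight h y μ hleast⟩)
  · exact Or.inl (Or.inr (mem_image_of_mem w (Finsupp.mem_support_iff.2 ha)))

theorem wellFoundedOn_dist_image_closure [LocallyFiniteOrder R] [LinearOrder Γ]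
    (hd : IsFirstDifferenceDist w d) {X : Set (ι →₀ R)} {a : ι →₀ R}
    (hX : ∀ h ≤ a, (d h '' X).WellFoundedOn (· > ·)) :
    (d a '' (AddSubmonoid.closure X : Set (ι →₀ R))).WellFoundedOn (· > ·) := by
  classical
  have hsupport : (insert 0 (w '' a.support)).Finite :=
    (a.support.finite_toSet.image w).insert 0
  have hbelow : (⋃ h ∈ Finset.Iic a, d h '' X).WellFoundedOn (· > ·) :=
    (Finset.wellFoundedOn_bUnion _).2 fun h hha => hX h (Finset.mem_Iic.1 hha)
  refine (hsupport.wellFoundedOn.union hbelow).subset ?_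
  simpa only [Finset.mem_Iic] using hd.dist_image_closure_subset X a

end IsFirstDifferenceDist

theorem stmt_13_general {ι R Γ : Type*} [LinearOrder ι] [AddCommMonoid R] [PartialOrder R]
    [CanonicallyOrderedAdd R] [LocallyFiniteOrder R] [LinearOrder Γ] [Zero Γ] {w : ι → Γ}
    (hw : Antitone w) (hpos : ∀ μ, 0 ≤ w μ) {d : (ι →₀ R) → (ι →₀ R) → Γ}
    (hd : IsFirstDifferenceDist w d) {X : Set (ι →₀ R)}
    (hX : (realizedBalls d X).WellFoundedOn (· > ·)) :
    (realizedBalls d (AddSubmonoid.closure X : Set (ι →₀ R))).WellFoundedOn (· > ·) := by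
  have hult := hd.isUltrametric hw hpos
  have hdist (h : ι →₀ R) : (d h '' X).WellFoundedOn (· > ·) :=
    hult.wellFoundedOn_dist_image (hult.wellFoundedOn_realizedBalls_iff.1 hX) h
  exact hult.wellFoundedOn_realizedBalls_iff.2 fun a _ =>
    hd.wellFoundedOn_dist_image_closure fun h _ => hdist h

/-- If the tree of balls of X (balls with realized radii, ordered by
reverse inclusion) is well-founded, so is that of the set X* of finite sums of
members of X. -/
theorem stmt_13 {ι : Type*} [LinearOrder ι] (w : ι → ℝ)
    (hw : StrictAnti w) (hpos : ∀ μ, 0 < w μ)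
    (d : (ι →₀ ℕ) → (ι →₀ ℕ) → ℝ)
    (hdiag : ∀ f, d f f = 0)
    (hdw : ∀ f g : ι →₀ ℕ, ∀ μ : ι, IsLeast {ν : ι | f ν ≠ g ν} μ → d f g = w μ)
    (X : Set (ι →₀ ℕ))
    (hX : ¬ ∃ f f' : ℕ → ι →₀ ℕ, (∀ n, f n ∈ X) ∧ (∀ n, f' n ∈ X) ∧
      ∀ n, {g ∈ X | d (f n) g ≤ d (f n) (f' n)} ⊂
            {g ∈ X | d (f (n + 1)) g ≤ d (f (n + 1)) (f' (n + 1))}) :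
    ¬ ∃ f f' : ℕ → ι →₀ ℕ,
      (∀ n, f n ∈ (AddSubmonoid.closure X : Set (ι →₀ ℕ))) ∧
      (∀ n, f' n ∈ (AddSubmonoid.closure X : Set (ι →₀ ℕ))) ∧
      ∀ n, {g ∈ (AddSubmonoid.closure X : Set (ι →₀ ℕ)) | d (f n) g ≤ d (f n) (f' n)} ⊂
            {g ∈ (AddSubmonoid.closure X : Set (ι →₀ ℕ)) |
              d (f (n + 1)) g ≤ d (f (n + 1)) (f' (n + 1))} := by
  exact wellFoundedOn_realizedBalls_iff_not_exists_chain.1 <|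
    stmt_13_general hw.antitone (fun μ => (hpos μ).le) ⟨hdiag, hdw⟩ <|
      wellFoundedOn_realizedBalls_iff_not_exists_chain.2 hX
end
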